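/- arXiv:1610.04158 — 4 statements merged into one kernel-verified Lean document; each statement's English description precedes it below -/
import Mathlib

section
/- Upper bound (recovery sequence) for the one-dimensional spin energy with nearest and n-th neighbour interactions: Let u : ℝ → ℝ satisfy 0 ≤ u(x) ≤ 1 for all x ∈ (0,1) and have finite pointwise total variation on (0,1). Then there exists a sequence (u_n)_{n≥2}, with u_n : {1,…,n²} → {0,1}, whose associated step functions converge weakly-* in L^∞(0,1) to u and such that limsup_{n→∞} F_n(u_n) ≤ 2·λ({x ∈ (0,1) : 0 < u(x) < 1}) + Var(u;(0,1)). -/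
open MeasureTheory Filter Set
open scoped ENNReal

noncomputable section

/-- The discrete spin energy
`F_n(u) = (1/n)·( Σ_{i=1}^{n²−1} (u_i − u_{i+1})² + Σ_{i=1}^{n²−n} (u_i − u_{i+n})² )`. -/
def discreteEnergy (n : ℕ) (u : ℕ → ℝ) : ℝ :=
  (1 / (n : ℝ)) * ((∑ i ∈ Finset.Icc 1 (n ^ 2 - 1), (u i - u (i + 1)) ^ 2) +
    ∑ i ∈ Finset.Icc 1 (n ^ 2 - n), (u i - u (i + n)) ^ 2)

/-- The step function associated with a discrete spin function: `x ↦ u_i` for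
`x ∈ ((i−1)/n², i/n²]`. -/
def stepFun (n : ℕ) (u : ℕ → ℝ) : ℝ → ℝ := fun x => u (⌈(n : ℝ) ^ 2 * x⌉.toNat)

/-- Weak-* convergence in `L^∞(I)`: `∫_I v_n g → ∫_I w g` for every integrable `g` on `I`. -/
def WeakStarTo (I : Set ℝ) (v : ℕ → ℝ → ℝ) (w : ℝ → ℝ) : Prop :=
  ∀ g : ℝ → ℝ, IntegrableOn g I volume →
    Tendsto (fun n => ∫ x in I, v n x * g x) atTop (nhds (∫ x in I, w x * g x))

/-!
Fill the grid row by row: the sites `k n + 1, …, (k + 1) n`, which cover the cell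
`(k / n, (k + 1) / n]`, carry `m k` ones followed by zeros, where `m k` is an integer rounding of
`n * u (x k)` for a point `x k` of the cell. The mean of the step function on the cell is then
`m k / n`, so weak-* convergence reduces to convergence of cell averages.

Each row that is neither full nor empty contains exactly one fall from one to zero. Since rises and
falls alternate along the chain, only the falls have to be counted, and a fall between two rows
requires `|m (k + 1) - m k| = n`. Hence the first sum is at most twice the number of mixed rows, up
to lower order terms, while the second is exactly `∑ k, |m (k + 1) - m k|`.

Two choices make these bounds sharp. The point `x k` is taken outside `{0 < u < 1}` whenever its
cell is not contained in that set, so that mixed rows occupy cells inside it. And the rounding has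
hysteresis: it moves only when forced to, so the variation of `m` exceeds that of `k ↦ n * u (x k)`
by at most one in total, which is negligible after division by `n`.
-/

/-- Integer rounding of a nonnegative real sequence with hysteresis: the rounded value is kept as
long as it lies in `[⌊w k⌋, ⌈w k⌉]` and is otherwise moved to the nearest point of that interval.
Unlike `⌊w k⌋`, it does not oscillate when `w` oscillates slightly around an integer. -/
def hysteresisRound (w : ℕ → ℝ) : ℕ → ℕ
  | 0 => ⌊w 0⌋₊
  | k + 1 => max ⌊w (k + 1)⌋₊ (min ⌈w (k + 1)⌉₊ (hysteresisRound w k))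

section HysteresisRound

variable {w : ℕ → ℝ}

lemma floor_le_hysteresisRound (w : ℕ → ℝ) (k : ℕ) : ⌊w k⌋₊ ≤ hysteresisRound w k := by
  cases k with
  | zero => exact le_rfl
  | succ k => exact le_max_left _ _

lemma hysteresisRound_le_ceil (w : ℕ → ℝ) (k : ℕ) : hysteresisRound w k ≤ ⌈w k⌉₊ := by
  cases k with
  | zero => exact Nat.floor_le_ceil _
  | succ k => exact max_le (Nat.floor_le_ceil _) (min_le_left _ _)

lemma abs_hysteresisRound_sub_le (hw : ∀ k, 0 ≤ w k) (k : ℕ) :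
    |(hysteresisRound w k : ℝ) - w k| ≤ 1 := by
  have hfloor : (⌊w k⌋₊ : ℝ) ≤ hysteresisRound w k := mod_cast floor_le_hysteresisRound w k
  have hceil : (hysteresisRound w k : ℝ) ≤ ⌈w k⌉₊ := mod_cast hysteresisRound_le_ceil w k
  rw [abs_le]
  constructor <;> linarith [Nat.lt_floor_add_one (w k), Nat.ceil_lt_add_one (hw k)]

lemma abs_hysteresisRound_succ_sub_add_abs_sub (hw : ∀ k, 0 ≤ w k) (k : ℕ) :
    |(hysteresisRound w (k + 1) : ℝ) - hysteresisRound w k| +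
        |(hysteresisRound w (k + 1) : ℝ) - w (k + 1)| =
      |(hysteresisRound w k : ℝ) - w (k + 1)| := by
  have hfloor := Nat.floor_le (hw (k + 1))
  have hceil := Nat.le_ceil (w (k + 1))
  have hround : hysteresisRound w (k + 1) =
    max ⌊w (k + 1)⌋₊ (min ⌈w (k + 1)⌉₊ (hysteresisRound w k)) := rfl
  rcases le_total (hysteresisRound w k) ⌊w (k + 1)⌋₊ with hlow | hlow
  · have hlow' : (hysteresisRound w k : ℝ) ≤ ⌊w (k + 1)⌋₊ := mod_cast hlow
    rw [hround, max_eq_left (min_le_of_right_le hlow), abs_of_nonneg (by linarith),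
      abs_of_nonpos (by linarith), abs_of_nonpos (by linarith)]
    ring
  rcases le_total (hysteresisRound w k) ⌈w (k + 1)⌉₊ with hhigh | hhigh
  · rw [hround, min_eq_right hhigh, max_eq_right hlow, sub_self, abs_zero, zero_add]
  · have hhigh' : (⌈w (k + 1)⌉₊ : ℝ) ≤ hysteresisRound w k := mod_cast hhigh
    rw [hround, min_eq_left hhigh, max_eq_right (Nat.floor_le_ceil _),
      abs_of_nonpos (by linarith), abs_of_nonneg (by linarith), abs_of_nonneg (by linarith)]
    ring

lemma sum_abs_hysteresisRound_succ_sub_le (hw : ∀ k, 0 ≤ w k) (n : ℕ) :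
    ∑ k ∈ Finset.range n, |(hysteresisRound w (k + 1) : ℝ) - hysteresisRound w k| ≤
      ∑ k ∈ Finset.range n, |w (k + 1) - w k| + 1 := by
  -- The rounding error at time `n` is paid for by the variation of `w`, which makes the induction
  -- close: moving the rounded value towards `w` trades error for variation at equal cost.
  suffices hpot : ∑ k ∈ Finset.range n, |(hysteresisRound w (k + 1) : ℝ) - hysteresisRound w k| +
      |(hysteresisRound w n : ℝ) - w n| ≤ ∑ k ∈ Finset.range n, |w (k + 1) - w k| + 1 from
    (le_add_of_nonneg_right (abs_nonneg _)).trans hpot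
  induction n with
  | zero => simpa using abs_hysteresisRound_sub_le hw 0
  | succ n ih =>
    have htri := abs_sub_le (hysteresisRound w n : ℝ) (w n) (w (n + 1))
    rw [abs_sub_comm (w n)] at htri
    rw [Finset.sum_range_succ, Finset.sum_range_succ]
    linarith [abs_hysteresisRound_succ_sub_add_abs_sub hw n]

end HysteresisRound

lemma sum_range_mul {M : Type*} [AddCommMonoid M] (f : ℕ → M) (a b : ℕ) :
    ∑ p ∈ Finset.range (a * b), f p =
      ∑ k ∈ Finset.range a, ∑ j ∈ Finset.range b, f (k * b + j) := by
  induction a with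
  | zero => simp
  | succ a ih => rw [Nat.succ_mul, Finset.sum_range_add, ih, Finset.sum_range_succ]

lemma sum_Icc_one_eq_sum_range {M : Type*} [AddCommMonoid M] (f : ℕ → M) (n : ℕ) :
    ∑ i ∈ Finset.Icc 1 n, f i = ∑ p ∈ Finset.range n, f (p + 1) := by
  rw [Finset.range_eq_Ico, Finset.sum_Ico_add' f 0 n 1]
  rfl

lemma sum_sq_sub_succ_le_two_mul_sum_descents {f : ℕ → ℝ} (hf : ∀ i, f i = 0 ∨ f i = 1) (n : ℕ) :
    ∑ i ∈ Finset.range n, (f i - f (i + 1)) ^ 2 ≤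
      2 * ∑ i ∈ Finset.range n, f i * (1 - f (i + 1)) + 1 := by
  have hsq : ∀ i, (f i - f (i + 1)) ^ 2 = 2 * (f i * (1 - f (i + 1))) + (f (i + 1) - f i) := by
    intro i
    rcases hf i with h | h <;> rcases hf (i + 1) with h' | h' <;> rw [h, h'] <;> norm_num
  have htel : f n - f 0 ≤ 1 := by
    rcases hf 0 with h | h <;> rcases hf n with h' | h' <;> rw [h, h'] <;> norm_num
  simp only [hsq, Finset.sum_add_distrib, Finset.sum_range_sub, ← Finset.mul_sum]
  linarith

lemma sum_range_ite_lt {n a : ℕ} (ha : a ≤ n) :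
    ∑ j ∈ Finset.range n, (if j < a then (1 : ℝ) else 0) = a := by
  have hfilter : {j ∈ Finset.range n | j < a} = Finset.range a := by
    ext j; simp only [Finset.mem_filter, Finset.mem_range]; omega
  rw [Finset.sum_boole, hfilter, Finset.card_range]

lemma sum_sq_ite_lt_sub_ite_lt {n a b : ℕ} (ha : a ≤ n) (hb : b ≤ n) :
    ∑ j ∈ Finset.range n, ((if j < a then (1 : ℝ) else 0) - if j < b then 1 else 0) ^ 2 =
      |(b : ℝ) - a| := by
  wlog hab : a ≤ b generalizing a b
  · rw [abs_sub_comm, ← this hb ha (le_of_not_ge hab)]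
    exact Finset.sum_congr rfl fun j _ => sub_sq_comm _ _
  have hsq : ∀ j : ℕ, ((if j < a then (1 : ℝ) else 0) - if j < b then 1 else 0) ^ 2 =
      (if j < b then 1 else 0) - if j < a then 1 else 0 := by
    intro j
    split_ifs <;> first | omega | norm_num
  rw [Finset.sum_congr rfl fun j _ => hsq j, Finset.sum_sub_distrib, sum_range_ite_lt ha,
    sum_range_ite_lt hb, abs_of_nonneg (sub_nonneg.2 (mod_cast hab))]

/-- The configuration made of rows of `n` consecutive sites, the `k`-th of which (counting from
`0`) consists of `m k` ones followed by zeros. Sites are numbered from `1`. -/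
def rowSpin (n : ℕ) (m : ℕ → ℕ) (i : ℕ) : ℝ := if (i - 1) % n < m ((i - 1) / n) then 1 else 0

/-- The indices `k < n` of the rows of `rowSpin n m` that contain both a one and a zero. -/
def mixedRows (n : ℕ) (m : ℕ → ℕ) : Finset ℕ := {k ∈ Finset.range n | 0 < m k ∧ m k < n}

section RowSpin

variable {n : ℕ} {m : ℕ → ℕ}

lemma rowSpin_eq_zero_or_one (n : ℕ) (m : ℕ → ℕ) (i : ℕ) :
    rowSpin n m i = 0 ∨ rowSpin n m i = 1 := by
  unfold rowSpin
  split_ifs <;> simp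

lemma abs_rowSpin_le_one (n : ℕ) (m : ℕ → ℕ) (i : ℕ) : |rowSpin n m i| ≤ 1 := by
  rcases rowSpin_eq_zero_or_one n m i with h | h <;> simp [h]

lemma rowSpin_mul_add_add_one {j : ℕ} (hj : j < n) (m : ℕ → ℕ) (k : ℕ) :
    rowSpin n m (k * n + j + 1) = if j < m k then 1 else 0 := by
  have hdiv : (k * n + j) / n = k := by
    rw [mul_comm, Nat.mul_add_div (by omega), Nat.div_eq_of_lt hj, add_zero]
  have hmod : (k * n + j) % n = j := by rw [Nat.mul_add_mod', Nat.mod_eq_of_lt hj]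
  rw [rowSpin, Nat.add_sub_cancel, hdiv, hmod]

lemma sum_range_rowSpin_row {k : ℕ} (hm : m k ≤ n) :
    ∑ j ∈ Finset.range n, rowSpin n m (k * n + j + 1) = m k := by
  rw [← sum_range_ite_lt hm]
  exact Finset.sum_congr rfl fun j hj => rowSpin_mul_add_add_one (Finset.mem_range.1 hj) m k

lemma sum_sq_rowSpin_sub_rowSpin_add (hm : ∀ k, m k ≤ n) (N : ℕ) :
    ∑ p ∈ Finset.range (N * n), (rowSpin n m (p + 1) - rowSpin n m (p + 1 + n)) ^ 2 =
      ∑ k ∈ Finset.range N, |(m (k + 1) : ℝ) - m k| := by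
  rw [sum_range_mul]
  refine Finset.sum_congr rfl fun k _ => ?_
  rw [← sum_sq_ite_lt_sub_ite_lt (hm k) (hm (k + 1))]
  refine Finset.sum_congr rfl fun j hj => ?_
  have hj := Finset.mem_range.1 hj
  have hnext : k * n + j + 1 + n = (k + 1) * n + j + 1 := by ring
  rw [hnext, rowSpin_mul_add_add_one hj, rowSpin_mul_add_add_one hj]

lemma sum_descents_within_row (N : ℕ) (m : ℕ → ℕ) (k : ℕ) :
    ∑ j ∈ Finset.range N, rowSpin (N + 1) m (k * (N + 1) + j + 1) *
        (1 - rowSpin (N + 1) m (k * (N + 1) + j + 1 + 1)) =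
      if 0 < m k ∧ m k < N + 1 then 1 else 0 := by
  -- A row is nonincreasing, so each descent equals the difference and the sum telescopes.
  have hdescent : ∀ j ∈ Finset.range N, rowSpin (N + 1) m (k * (N + 1) + j + 1) *
        (1 - rowSpin (N + 1) m (k * (N + 1) + j + 1 + 1)) =
      (if j < m k then 1 else 0) - if j + 1 < m k then 1 else 0 := by
    intro j hj
    have hj := Finset.mem_range.1 hj
    rw [rowSpin_mul_add_add_one (by omega), add_assoc (k * (N + 1)) j 1,
      rowSpin_mul_add_add_one (by omega)]
    split_ifs <;> first | omega | norm_num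
  rw [Finset.sum_congr rfl hdescent,
    Finset.sum_range_sub' (fun j => if j < m k then (1 : ℝ) else 0)]
  split_ifs <;> first | omega | norm_num

lemma descent_between_rows_le {N : ℕ} (hm : ∀ k, m k ≤ N + 1) (k : ℕ) :
    rowSpin (N + 1) m (k * (N + 1) + N + 1) * (1 - rowSpin (N + 1) m (k * (N + 1) + N + 1 + 1)) ≤
      |(m (k + 1) : ℝ) - m k| / (N + 1 : ℕ) := by
  have hnext : k * (N + 1) + N + 1 + 1 = (k + 1) * (N + 1) + 0 + 1 := by ring
  rw [hnext, rowSpin_mul_add_add_one (by omega),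
    rowSpin_mul_add_add_one (j := 0) (by omega) m (k + 1)]
  by_cases hfall : m k = N + 1 ∧ m (k + 1) = 0
  · rw [hfall.1, hfall.2, Nat.cast_zero, zero_sub, abs_neg, Nat.abs_cast,
      div_self (by positivity)]
    simp
  · have hm := hm k
    refine le_trans (le_of_eq ?_) (by positivity : (0 : ℝ) ≤ _)
    split_ifs <;> first | omega | norm_num

lemma sum_descents_rowSpin_le {N : ℕ} (hm : ∀ k, m k ≤ N + 1) :
    ∑ p ∈ Finset.range ((N + 1) ^ 2 - 1),
        rowSpin (N + 1) m (p + 1) * (1 - rowSpin (N + 1) m (p + 1 + 1)) ≤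
      (mixedRows (N + 1) m).card +
        (∑ k ∈ Finset.range N, |(m (k + 1) : ℝ) - m k|) / (N + 1 : ℕ) := by
  have hsize : (N + 1) ^ 2 - 1 = N * (N + 1) + N := by
    rw [show (N + 1) ^ 2 = N * (N + 1) + N + 1 by ring, Nat.add_sub_cancel]
  have hmixed : ((mixedRows (N + 1) m).card : ℝ) =
      ∑ k ∈ Finset.range (N + 1), if 0 < m k ∧ m k < N + 1 then 1 else 0 := by
    rw [mixedRows, Finset.sum_boole]
  rw [hsize, Finset.sum_range_add, sum_range_mul, sum_descents_within_row, hmixed,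
    Finset.sum_range_succ _ N, Finset.sum_div, add_right_comm, ← Finset.sum_add_distrib]
  gcongr with k
  rw [Finset.sum_range_succ, sum_descents_within_row]
  gcongr
  exact descent_between_rows_le hm k

theorem discreteEnergy_rowSpin_le (hn : 0 < n) (hm : ∀ k, m k ≤ n) :
    discreteEnergy n (rowSpin n m) ≤
      (2 * (mixedRows n m).card + 1 +
        (2 / n + 1) * ∑ k ∈ Finset.range (n - 1), |(m (k + 1) : ℝ) - m k|) / n := by
  obtain ⟨N, rfl⟩ := Nat.exists_eq_add_one.2 hn
  have hsize : (N + 1) ^ 2 - (N + 1) = N * (N + 1) := by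
    rw [show (N + 1) ^ 2 = N * (N + 1) + (N + 1) by ring, Nat.add_sub_cancel]
  have hhor := sum_sq_sub_succ_le_two_mul_sum_descents
    (fun p => rowSpin_eq_zero_or_one (N + 1) m (p + 1)) ((N + 1) ^ 2 - 1)
  have hdesc := sum_descents_rowSpin_le hm
  rw [discreteEnergy, sum_Icc_one_eq_sum_range, sum_Icc_one_eq_sum_range, hsize,
    sum_sq_rowSpin_sub_rowSpin_add hm, one_div_mul_eq_div, Nat.add_sub_cancel]
  gcongr ?_ / _
  rw [add_mul, one_mul, div_mul_eq_mul_div, mul_div_assoc]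
  linarith

end RowSpin

lemma sum_eVariationOn_Ioo_le {α E : Type*} [LinearOrder α] [PseudoEMetricSpace E] (f : α → E)
    {t : ℕ → α} (ht : Monotone t) (n : ℕ) :
    ∑ k ∈ Finset.range n, eVariationOn f (Ioo (t k) (t (k + 1))) ≤
      eVariationOn f (Ioo (t 0) (t n)) := by
  induction n with
  | zero => simp
  | succ n ih =>
    rw [Finset.sum_range_succ]
    calc _ ≤ eVariationOn f (Ioo (t 0) (t n)) + eVariationOn f (Ioo (t n) (t (n + 1))) := by gcongr
      _ ≤ eVariationOn f (Ioo (t 0) (t n) ∪ Ioo (t n) (t (n + 1))) :=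
        eVariationOn.add_le_union f fun x hx y hy => (hx.2.trans hy.1).le
      _ ≤ eVariationOn f (Ioo (t 0) (t (n + 1))) := eVariationOn.mono f <| union_subset
        (Ioo_subset_Ioo_right (ht n.le_succ)) (Ioo_subset_Ioo_left (ht n.zero_le))

lemma sum_measure_Ioo_le {α : Type*} [LinearOrder α] [TopologicalSpace α] [OrderClosedTopology α]
    [MeasurableSpace α] [OpensMeasurableSpace α] (μ : Measure α) {t : ℕ → α} (ht : Monotone t)
    {T : Finset ℕ} {A : Set α} (hA : ∀ k ∈ T, Ioo (t k) (t (k + 1)) ⊆ A) :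
    ∑ k ∈ T, μ (Ioo (t k) (t (k + 1))) ≤ μ A := by
  have hdisj : Pairwise (Function.onFun Disjoint fun k => Ioo (t k) (t (k + 1))) :=
    ht.pairwise_disjoint_on_Ioo_succ
  rw [← measure_biUnion_finset (hdisj.set_pairwise _) fun k _ => measurableSet_Ioo]
  exact measure_mono (iUnion₂_subset hA)

lemma exists_mem_and_subset_of_mem {α : Type*} {s : Set α} (hs : s.Nonempty) (A : Set α) :
    ∃ x ∈ s, x ∈ A → s ⊆ A := by
  by_cases hsA : s ⊆ A
  · exact hs.imp fun x hx => ⟨hx, fun _ => hsA⟩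
  · obtain ⟨x, hx, hxA⟩ := not_subset.1 hsA
    exact ⟨x, hx, fun h => absurd h hxA⟩

lemma exists_monotone_sample {α : Type*} [LinearOrder α] [DenselyOrdered α] {t : ℕ → α}
    (ht : StrictMono t) {n : ℕ} (hn : 0 < n) (A : Set α) :
    ∃ x : ℕ → α, Monotone x ∧ (∀ k, x k ∈ Ioo (t 0) (t n)) ∧
      ∀ k < n, x k ∈ Ioo (t k) (t (k + 1)) ∧ (x k ∈ A → Ioo (t k) (t (k + 1)) ⊆ A) := by
  choose y hy hyA using fun k =>
    exists_mem_and_subset_of_mem (nonempty_Ioo.2 (ht (Nat.lt_add_one k))) A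
  have hymono : Monotone y := monotone_nat_of_le_succ fun k => ((hy k).2.trans (hy (k + 1)).1).le
  refine ⟨fun k => y (min k (n - 1)), fun k l hkl => hymono (min_le_min_right _ hkl), ?_, ?_⟩
  · exact fun k => Ioo_subset_Ioo (ht.monotone (Nat.zero_le _)) (ht.monotone (by omega)) (hy _)
  · intro k hk
    simp only [min_eq_left (Nat.le_sub_one_of_lt hk)]
    exact ⟨hy k, hyA k⟩

/-- The `k`-th node `k / n` of the uniform partition of `[0, 1]` into `n` intervals. -/
def gridPoint (n k : ℕ) : ℝ := k / n

section GridPoint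

variable {n : ℕ}

lemma gridPoint_zero (n : ℕ) : gridPoint n 0 = 0 := by simp [gridPoint]

lemma gridPoint_self (hn : 0 < n) : gridPoint n n = 1 := div_self (by positivity)

lemma gridPoint_succ_sub (n k : ℕ) : gridPoint n (k + 1) - gridPoint n k = 1 / n := by
  rw [gridPoint, gridPoint, ← sub_div, Nat.cast_add_one, add_sub_cancel_left]

lemma gridPoint_mono (n : ℕ) : Monotone (gridPoint n) := fun k l hkl => by
  unfold gridPoint
  gcongr

lemma gridPoint_strictMono (hn : 0 < n) : StrictMono (gridPoint n) := fun k l hkl => by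
  unfold gridPoint
  gcongr

lemma Ioc_gridPoint_subset (hn : 0 < n) {k : ℕ} (hk : k < n) :
    Ioc (gridPoint n k) (gridPoint n (k + 1)) ⊆ Ioc 0 1 := by
  rw [← gridPoint_zero n, ← gridPoint_self hn]
  exact Ioc_subset_Ioc (gridPoint_mono n k.zero_le) (gridPoint_mono n hk)

lemma Ioo_gridPoint_subset (hn : 0 < n) {k : ℕ} (hk : k < n) :
    Ioo (gridPoint n k) (gridPoint n (k + 1)) ⊆ Ioo 0 1 := by
  rw [← gridPoint_zero n, ← gridPoint_self hn]
  exact Ioo_subset_Ioo (gridPoint_mono n k.zero_le) (gridPoint_mono n hk)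

lemma volume_Ioo_gridPoint (n k : ℕ) :
    volume (Ioo (gridPoint n k) (gridPoint n (k + 1))) = ENNReal.ofReal (1 / n) := by
  rw [Real.volume_Ioo, gridPoint_succ_sub]

end GridPoint

lemma tendsto_integral_mul_zero_of_continuous {α ι : Type*} [TopologicalSpace α] [NormalSpace α]
    [R1Space α] [WeaklyLocallyCompactSpace α] [MeasurableSpace α] [BorelSpace α] {μ : Measure α}
    [μ.Regular] {l : Filter ι} {f : ι → α → ℝ} {C : ℝ}
    (hf : ∀ i, AEStronglyMeasurable (f i) μ) (hC : ∀ i, ∀ᵐ x ∂μ, ‖f i x‖ ≤ C)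
    (hlim : ∀ G : α → ℝ, Continuous G → HasCompactSupport G →
      Tendsto (fun i => ∫ x, f i x * G x ∂μ) l (nhds 0))
    {g : α → ℝ} (hg : Integrable g μ) : Tendsto (fun i => ∫ x, f i x * g x ∂μ) l (nhds 0) := by
  refine Metric.tendsto_nhds.2 fun ε hε => ?_
  obtain ⟨η, hη, hCη⟩ := exists_pos_mul_lt (half_pos hε) |C|
  obtain ⟨G, hGsupp, hGg, hGcont, hGint⟩ := hg.exists_hasCompactSupport_integral_sub_le hη
  filter_upwards [Metric.tendsto_nhds.1 (hlim G hGcont hGsupp) _ (half_pos hε)] with i hi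
  rw [dist_zero_right] at hi ⊢
  have hdiff : Integrable (fun x => g x - G x) μ := hg.sub hGint
  have hsplit : ∫ x, f i x * g x ∂μ = ∫ x, f i x * (g x - G x) ∂μ + ∫ x, f i x * G x ∂μ := by
    rw [← integral_add (hdiff.bdd_mul (hf i) (hC i)) (hGint.bdd_mul (hf i) (hC i))]
    simp only [mul_sub, sub_add_cancel]
  have happrox : ‖∫ x, f i x * (g x - G x) ∂μ‖ ≤ |C| * η := by
    calc _ ≤ ∫ x, |C| * ‖g x - G x‖ ∂μ := by
          refine norm_integral_le_of_norm_le (hdiff.norm.const_mul _) ?_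
          filter_upwards [hC i] with x hx
          rw [norm_mul]
          gcongr
          exact hx.trans (le_abs_self C)
      _ ≤ |C| * η := by rw [integral_const_mul]; gcongr
  rw [hsplit]
  linarith [norm_add_le (∫ x, f i x * (g x - G x) ∂μ) (∫ x, f i x * G x ∂μ)]

lemma abs_intervalIntegral_mul_le {f G : ℝ → ℝ} {a b B C ω : ℝ} (hab : a ≤ b)
    (hf : IntervalIntegrable f volume a b) (hB : ∀ᵐ x, x ∈ Ioc a b → |f x| ≤ B)
    (hG : Continuous G) (hC : |G a| ≤ C) (hω : ∀ x ∈ Ioc a b, |G x - G a| ≤ ω) :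
    |∫ x in a..b, f x * G x| ≤ B * ω * (b - a) + C * |∫ x in a..b, f x| := by
  have hsplit : ∫ x in a..b, f x * G x =
      (∫ x in a..b, f x * (G x - G a)) + G a * ∫ x in a..b, f x := by
    rw [← intervalIntegral.integral_const_mul, ← intervalIntegral.integral_add
      (hf.mul_continuousOn (by fun_prop)) (hf.const_mul _)]
    congr with x
    ring
  have hosc : |∫ x in a..b, f x * (G x - G a)| ≤ B * ω * (b - a) := by
    rw [← abs_of_nonneg (sub_nonneg.2 hab), ← Real.norm_eq_abs (∫ _ in _.._, _)]
    refine intervalIntegral.norm_integral_le_of_norm_le_const_ae ?_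
    filter_upwards [hB] with x hx hxab
    rw [uIoc_of_le hab] at hxab
    rw [norm_mul]
    exact mul_le_mul (hx hxab) (hω x hxab) (abs_nonneg _) ((abs_nonneg _).trans (hx hxab))
  calc _ ≤ |∫ x in a..b, f x * (G x - G a)| + |G a * ∫ x in a..b, f x| :=
        hsplit ▸ abs_add_le _ _
    _ ≤ B * ω * (b - a) + C * |∫ x in a..b, f x| := by rw [abs_mul]; gcongr

lemma abs_integral_mul_le_sum_gridPoint {f G : ℝ → ℝ} {n : ℕ} {B C ω : ℝ} (hn : 0 < n)
    (hf : IntegrableOn f (Ioo 0 1)) (hB : ∀ x ∈ Ioo (0 : ℝ) 1, |f x| ≤ B) (hG : Continuous G)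
    (hC : ∀ x, |G x| ≤ C) (hω : ∀ x y : ℝ, |x - y| ≤ 1 / n → |G x - G y| ≤ ω) :
    |∫ x in Ioo 0 1, f x * G x| ≤
      B * ω + C * ∑ k ∈ Finset.range n, |∫ x in gridPoint n k..gridPoint n (k + 1), f x| := by
  have hcell : ∀ k < n, IntervalIntegrable f volume (gridPoint n k) (gridPoint n (k + 1)) := by
    intro k hk
    rw [intervalIntegrable_iff_integrableOn_Ioo_of_le (gridPoint_mono n k.le_succ)]
    exact hf.mono_set (Ioo_gridPoint_subset hn hk)
  have hbound : ∀ k ∈ Finset.range n,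
      |∫ x in gridPoint n k..gridPoint n (k + 1), f x * G x| ≤
        B * ω * (1 / n) + C * |∫ x in gridPoint n k..gridPoint n (k + 1), f x| := by
    intro k hk
    have hk := Finset.mem_range.1 hk
    rw [← gridPoint_succ_sub n k]
    refine abs_intervalIntegral_mul_le (gridPoint_mono n k.le_succ) (hcell k hk) ?_ hG (hC _) ?_
    · filter_upwards [Ioo_ae_eq_Ioc (a := (0 : ℝ)) (b := 1) (μ := volume)] with x hx hxk
      exact hB x (hx.mpr (Ioc_gridPoint_subset hn hk hxk))
    · intro x hx
      refine hω _ _ ?_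
      rw [abs_of_pos (sub_pos.2 hx.1), ← gridPoint_succ_sub n k]
      exact sub_le_sub_right hx.2 _
  calc |∫ x in Ioo 0 1, f x * G x|
      = |∑ k ∈ Finset.range n, ∫ x in gridPoint n k..gridPoint n (k + 1), f x * G x| := by
        rw [intervalIntegral.sum_integral_adjacent_intervals fun k hk =>
          (hcell k hk).mul_continuousOn hG.continuousOn, gridPoint_zero, gridPoint_self hn,
          intervalIntegral.integral_of_le zero_le_one, integral_Ioc_eq_integral_Ioo]
    _ ≤ ∑ k ∈ Finset.range n, (B * ω * (1 / n) +
          C * |∫ x in gridPoint n k..gridPoint n (k + 1), f x|) :=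
        (Finset.abs_sum_le_sum_abs _ _).trans (Finset.sum_le_sum hbound)
    _ = _ := by
        rw [Finset.sum_add_distrib, Finset.sum_const, Finset.card_range, nsmul_eq_mul,
          ← Finset.mul_sum]
        field_simp

lemma tendsto_integral_mul_of_tendsto_sum_abs_integral {f : ℕ → ℝ → ℝ} {B : ℝ}
    (hf : ∀ n, IntegrableOn (f n) (Ioo 0 1)) (hB : ∀ n, ∀ x ∈ Ioo (0 : ℝ) 1, |f n x| ≤ B)
    (hlim : Tendsto (fun n => ∑ k ∈ Finset.range n,
      |∫ x in gridPoint n k..gridPoint n (k + 1), f n x|) atTop (nhds 0))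
    {G : ℝ → ℝ} (hG : Continuous G) (hGsupp : HasCompactSupport G) :
    Tendsto (fun n => ∫ x in Ioo 0 1, f n x * G x) atTop (nhds 0) := by
  obtain ⟨C, hC⟩ := hGsupp.exists_bound_of_continuous hG
  refine Metric.tendsto_nhds.2 fun ε hε => ?_
  obtain ⟨ω, hω, hBω⟩ := exists_pos_mul_lt (half_pos hε) B
  obtain ⟨δ, hδ, hGδ⟩ := Metric.uniformContinuous_iff_le.1
    (hGsupp.uniformContinuous_of_continuous hG) ω hω
  have hClim := hlim.const_mul C
  rw [mul_zero] at hClim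
  filter_upwards [eventually_gt_atTop 0, hClim.eventually_lt_const (half_pos hε),
    tendsto_one_div_atTop_nhds_zero_nat.eventually_le_const hδ] with n hn hsum hmesh
  rw [dist_zero_right]
  have hbound := abs_integral_mul_le_sum_gridPoint hn (hf n) (hB n) hG hC
    fun x y hxy => hGδ (hxy.trans hmesh)
  exact hbound.trans_lt (by linarith)

theorem weakStarTo_of_tendsto_sum_abs_integral_sub {v : ℕ → ℝ → ℝ} {w : ℝ → ℝ} {C : ℝ}
    (hv : ∀ n, AEStronglyMeasurable (v n) (volume.restrict (Ioo 0 1)))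
    (hw : AEStronglyMeasurable w (volume.restrict (Ioo 0 1)))
    (hvC : ∀ n, ∀ x ∈ Ioo (0 : ℝ) 1, |v n x| ≤ C) (hwC : ∀ x ∈ Ioo (0 : ℝ) 1, |w x| ≤ C)
    (hlim : Tendsto (fun n => ∑ k ∈ Finset.range n,
      |∫ x in gridPoint n k..gridPoint n (k + 1), (v n x - w x)|) atTop (nhds 0)) :
    WeakStarTo (Ioo 0 1) v w := by
  intro g hg
  have hdiff : ∀ n, ∀ x ∈ Ioo (0 : ℝ) 1, |v n x - w x| ≤ C + C := fun n x hx =>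
    (abs_sub _ _).trans (add_le_add (hvC n x hx) (hwC x hx))
  have hzero : Tendsto (fun n => ∫ x in Ioo 0 1, (v n x - w x) * g x) atTop (nhds 0) :=
    tendsto_integral_mul_zero_of_continuous (fun n => (hv n).sub hw)
      (fun n => ae_restrict_of_forall_mem measurableSet_Ioo (hdiff n))
      (fun G hG hGsupp => tendsto_integral_mul_of_tendsto_sum_abs_integral (fun n =>
        .of_bound measure_Ioo_lt_top ((hv n).sub hw) (C + C)
          (ae_restrict_of_forall_mem measurableSet_Ioo (hdiff n))) hdiff hlim hG hGsupp) hg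
  rw [← tendsto_sub_nhds_zero_iff]
  refine hzero.congr fun n => ?_
  rw [← integral_sub (hg.bdd_mul (hv n) (ae_restrict_of_forall_mem measurableSet_Ioo (hvC n)))
    (hg.bdd_mul hw (ae_restrict_of_forall_mem measurableSet_Ioo hwC))]
  simp only [sub_mul]

section BoundedVariation

lemma aestronglyMeasurable_restrict_of_locallyBoundedVariationOn {f : ℝ → ℝ} {s : Set ℝ}
    (hf : LocallyBoundedVariationOn f s) (hs : MeasurableSet s) (μ : Measure ℝ) :
    AEStronglyMeasurable f (μ.restrict s) := by
  obtain ⟨p, q, hp, hq, rfl⟩ := hf.exists_monotoneOn_sub_monotoneOn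
  exact ((aemeasurable_restrict_of_monotoneOn hs hp).sub
    (aemeasurable_restrict_of_monotoneOn hs hq)).aestronglyMeasurable

lemma integrableOn_of_boundedVariationOn {f : ℝ → ℝ} {s : Set ℝ} {μ : Measure ℝ}
    (hf : BoundedVariationOn f s) (hs : MeasurableSet s) (hμs : μ s < ∞) :
    IntegrableOn f s μ := by
  rcases s.eq_empty_or_nonempty with rfl | ⟨c, hc⟩
  · exact integrableOn_empty
  refine .of_bound hμs (aestronglyMeasurable_restrict_of_locallyBoundedVariationOn
    hf.locallyBoundedVariationOn hs μ) (|f c| + (eVariationOn f s).toReal)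
    (ae_restrict_of_forall_mem hs fun x hx => ?_)
  have hdist := hf.dist_le hx hc
  rw [Real.dist_eq] at hdist
  rw [Real.norm_eq_abs]
  linarith [abs_sub_abs_le_abs_sub (f x) (f c)]

lemma intervalIntegrable_of_boundedVariationOn {f : ℝ → ℝ} {a b : ℝ} (hab : a ≤ b)
    (hf : BoundedVariationOn f (Ioo a b)) : IntervalIntegrable f volume a b :=
  (intervalIntegrable_iff_integrableOn_Ioo_of_le hab).2
    (integrableOn_of_boundedVariationOn hf measurableSet_Ioo measure_Ioo_lt_top)

lemma sum_abs_sub_le_toReal_eVariationOn {α : Type*} [LinearOrder α] {f : α → ℝ} {s : Set α}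
    (hf : BoundedVariationOn f s) {x : ℕ → α} (hx : Monotone x) (hxs : ∀ k, x k ∈ s) (n : ℕ) :
    ∑ k ∈ Finset.range n, |f (x (k + 1)) - f (x k)| ≤ (eVariationOn f s).toReal := by
  have hle := ENNReal.toReal_mono hf (eVariationOn.sum_le (f := f) (n := n) hx hxs)
  rw [ENNReal.toReal_sum fun _ _ => edist_ne_top _ _] at hle
  simpa only [edist_dist, Real.dist_eq, ENNReal.toReal_ofReal (abs_nonneg _)] using hle

lemma sum_toReal_eVariationOn_Ioo_le {α E : Type*} [LinearOrder α] [PseudoEMetricSpace E]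
    {f : α → E} {t : ℕ → α} (ht : Monotone t) {n : ℕ}
    (hf : BoundedVariationOn f (Ioo (t 0) (t n))) :
    ∑ k ∈ Finset.range n, (eVariationOn f (Ioo (t k) (t (k + 1)))).toReal ≤
      (eVariationOn f (Ioo (t 0) (t n))).toReal := by
  have hsum := sum_eVariationOn_Ioo_le f ht n
  rw [← ENNReal.toReal_sum (ENNReal.sum_ne_top.1 (ne_top_of_le_ne_top hf hsum))]
  exact ENNReal.toReal_mono hf hsum

lemma abs_intervalIntegral_sub_mul_le {f : ℝ → ℝ} {a b y : ℝ} (hab : a ≤ b)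
    (hf : BoundedVariationOn f (Ioo a b)) (hy : y ∈ Ioo a b) :
    |(∫ x in a..b, f x) - (b - a) * f y| ≤ (b - a) * (eVariationOn f (Ioo a b)).toReal := by
  have hcentre : (∫ x in a..b, f x) - (b - a) * f y = ∫ x in a..b, (f x - f y) := by
    rw [intervalIntegral.integral_sub
      (intervalIntegrable_of_boundedVariationOn hab hf) intervalIntegrable_const,
      intervalIntegral.integral_const, smul_eq_mul]
  rw [hcentre, ← Real.norm_eq_abs, mul_comm, ← abs_of_nonneg (sub_nonneg.2 hab)]
  refine intervalIntegral.norm_integral_le_of_norm_le_const_ae ?_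
  filter_upwards [Ioo_ae_eq_Ioc (a := a) (b := b) (μ := volume)] with x hx hxab
  rw [uIoc_of_le hab] at hxab
  exact hf.dist_le (hx.mpr hxab) hy

end BoundedVariation

section StepFun

variable {n : ℕ} {v : ℕ → ℝ}

lemma measurable_stepFun (n : ℕ) (v : ℕ → ℝ) : Measurable (stepFun n v) :=
  (measurable_from_top (f := fun j : ℤ => v j.toNat)).comp
    (Int.measurable_ceil.comp (measurable_const.mul measurable_id))

lemma intervalIntegrable_stepFun {C : ℝ} (hv : ∀ i, |v i| ≤ C) (a b : ℝ) :
    IntervalIntegrable (stepFun n v) volume a b :=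
  intervalIntegrable_const.mono_fun' (measurable_stepFun n v).aestronglyMeasurable
    (.of_forall fun _ => hv _)

lemma gridPoint_sq_mul (hn : 0 < n) (k : ℕ) : gridPoint (n ^ 2) (k * n) = gridPoint n k := by
  unfold gridPoint
  push_cast
  field_simp

lemma stepFun_eq_of_mem_Ioc (hn : 0 < n) (v : ℕ → ℝ) {i : ℕ} {x : ℝ}
    (hx : x ∈ Ioc (gridPoint (n ^ 2) i) (gridPoint (n ^ 2) (i + 1))) :
    stepFun n v x = v (i + 1) := by
  have hn2 : (0 : ℝ) < n ^ 2 := by positivity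
  simp only [gridPoint, mem_Ioc, Nat.cast_pow, div_lt_iff₀' hn2, le_div_iff₀' hn2] at hx
  have hceil : ⌈(n : ℝ) ^ 2 * x⌉ = (i + 1 : ℕ) := by
    rw [Int.ceil_eq_iff]
    push_cast at hx ⊢
    exact ⟨by linarith [hx.1], hx.2⟩
  rw [stepFun, hceil, Int.toNat_natCast]

lemma integral_stepFun_site (hn : 0 < n) (v : ℕ → ℝ) (i : ℕ) :
    ∫ x in gridPoint (n ^ 2) i..gridPoint (n ^ 2) (i + 1), stepFun n v x = v (i + 1) / n ^ 2 := by
  rw [intervalIntegral.integral_congr_Ioo_of_le (g := fun _ => v (i + 1))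
      (gridPoint_mono _ i.le_succ) fun x hx => stepFun_eq_of_mem_Ioc hn v (Ioo_subset_Ioc_self hx),
    intervalIntegral.integral_const, gridPoint_succ_sub, smul_eq_mul, one_div_mul_eq_div,
    Nat.cast_pow]

lemma integral_stepFun_row (hn : 0 < n) {C : ℝ} (hv : ∀ i, |v i| ≤ C) (k : ℕ) :
    ∫ x in gridPoint n k..gridPoint n (k + 1), stepFun n v x =
      (∑ j ∈ Finset.range n, v (k * n + j + 1)) / n ^ 2 := by
  have hadj := intervalIntegral.sum_integral_adjacent_intervals (μ := volume) (n := n)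
    (a := fun j => gridPoint (n ^ 2) (k * n + j)) (f := stepFun n v) fun _ _ =>
      intervalIntegrable_stepFun hv _ _
  rw [add_zero, ← Nat.succ_mul, gridPoint_sq_mul hn, gridPoint_sq_mul hn] at hadj
  rw [← hadj, Finset.sum_div]
  exact Finset.sum_congr rfl fun j _ => integral_stepFun_site hn v (k * n + j)

end StepFun

section Recovery

variable {n : ℕ} {m : ℕ → ℕ}

lemma card_mixedRows_div_le {A : Set ℝ} (hA : volume A ≠ ∞)
    (hmA : ∀ k ∈ mixedRows n m, Ioo (gridPoint n k) (gridPoint n (k + 1)) ⊆ A) :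
    ((mixedRows n m).card : ℝ) / n ≤ volume.real A := by
  have hle := ENNReal.toReal_mono hA (sum_measure_Ioo_le volume (gridPoint_mono n) hmA)
  simp only [volume_Ioo_gridPoint, Finset.sum_const] at hle
  rwa [ENNReal.toReal_nsmul, ENNReal.toReal_ofReal (by positivity), nsmul_eq_mul,
    mul_one_div] at hle

lemma mem_Ioo_of_mem_mixedRows_hysteresisRound {w : ℕ → ℝ} {k : ℕ} (hw : 0 ≤ w k)
    (hk : k ∈ mixedRows n (hysteresisRound w)) : w k ∈ Ioo (0 : ℝ) n := by
  obtain ⟨-, hpos, hlt⟩ := Finset.mem_filter.1 hk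
  exact ⟨Nat.ceil_pos.1 (hpos.trans_le (hysteresisRound_le_ceil w k)),
    (Nat.floor_lt hw).1 ((floor_le_hysteresisRound w k).trans_lt hlt)⟩

lemma discreteEnergy_rowSpin_hysteresisRound_le {w : ℕ → ℝ} (hn : 0 < n)
    (hw : ∀ k, w k ∈ Icc (0 : ℝ) n) {V : ℝ}
    (hV : ∑ k ∈ Finset.range (n - 1), |w (k + 1) - w k| ≤ n * V) :
    discreteEnergy n (rowSpin n (hysteresisRound w)) ≤
      2 * ((mixedRows n (hysteresisRound w)).card / n) + V + (4 + 2 * V) / n := by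
  have hn1 : (1 : ℝ) ≤ n := mod_cast hn
  have hvar := (sum_abs_hysteresisRound_succ_sub_le (fun k => (hw k).1) (n - 1)).trans
    (add_le_add_left hV 1)
  calc _ ≤ (2 * (mixedRows n (hysteresisRound w)).card + 1 + (2 / n + 1) * (n * V + 1)) / n := by
        refine (discreteEnergy_rowSpin_le hn fun k => ?_).trans (by gcongr)
        exact (hysteresisRound_le_ceil w k).trans (Nat.ceil_le.2 (hw k).2)
    _ = 2 * ((mixedRows n (hysteresisRound w)).card / n) + V + (2 + 2 / n + 2 * V) / n := by
        field_simp
        ring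
    _ ≤ _ := by
        have : (2 : ℝ) / n ≤ 2 := div_le_self zero_le_two hn1
        gcongr
        linarith

lemma abs_integral_stepFun_rowSpin_sub_le {u : ℝ → ℝ} {k : ℕ} {y : ℝ} (hn : 0 < n)
    (hmn : m k ≤ n) (hmy : |(m k : ℝ) - n * u y| ≤ 1)
    (hu : BoundedVariationOn u (Ioo (gridPoint n k) (gridPoint n (k + 1))))
    (hy : y ∈ Ioo (gridPoint n k) (gridPoint n (k + 1))) :
    |∫ x in gridPoint n k..gridPoint n (k + 1), (stepFun n (rowSpin n m) x - u x)| ≤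
      1 / n * (1 / n + (eVariationOn u (Ioo (gridPoint n k) (gridPoint n (k + 1)))).toReal) := by
  have hle := gridPoint_mono n k.le_succ
  have hvar := abs_intervalIntegral_sub_mul_le hle hu hy
  rw [gridPoint_succ_sub, abs_sub_comm] at hvar
  have hround : |(m k : ℝ) / n ^ 2 - 1 / n * u y| ≤ (1 / n * (1 / n) : ℝ) := by
    have hscale : (m k : ℝ) / n ^ 2 - 1 / n * u y = 1 / n * (1 / n) * (m k - n * u y) := by
      field_simp
    rw [hscale, abs_mul, abs_of_nonneg (by positivity)]
    exact mul_le_of_le_one_right (by positivity) hmy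
  rw [intervalIntegral.integral_sub (intervalIntegrable_stepFun (abs_rowSpin_le_one n m) _ _)
      (intervalIntegrable_of_boundedVariationOn hle hu),
    integral_stepFun_row hn (abs_rowSpin_le_one n m), sum_range_rowSpin_row hmn, mul_add]
  exact (abs_sub_le _ _ _).trans (add_le_add hround hvar)

lemma sum_abs_integral_stepFun_rowSpin_sub_le {u : ℝ → ℝ} {x : ℕ → ℝ} (hn : 0 < n)
    (hu : BoundedVariationOn u (Ioo 0 1))
    (hx : ∀ k < n, x k ∈ Ioo (gridPoint n k) (gridPoint n (k + 1)))
    (hmn : ∀ k < n, m k ≤ n) (hmx : ∀ k < n, |(m k : ℝ) - n * u (x k)| ≤ 1) :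
    ∑ k ∈ Finset.range n,
        |∫ y in gridPoint n k..gridPoint n (k + 1), (stepFun n (rowSpin n m) y - u y)| ≤
      (1 + (eVariationOn u (Ioo 0 1)).toReal) / n := by
  have hvar := sum_toReal_eVariationOn_Ioo_le (f := u) (n := n) (gridPoint_mono n)
  rw [gridPoint_zero, gridPoint_self hn] at hvar
  calc _ ≤ ∑ k ∈ Finset.range n, 1 / (n : ℝ) *
        (1 / n + (eVariationOn u (Ioo (gridPoint n k) (gridPoint n (k + 1)))).toReal) := by
        refine Finset.sum_le_sum fun k hk => ?_
        have hk := Finset.mem_range.1 hk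
        exact abs_integral_stepFun_rowSpin_sub_le hn (hmn k hk) (hmx k hk)
          (hu.mono (Ioo_gridPoint_subset hn hk)) (hx k hk)
    _ = (1 + ∑ k ∈ Finset.range n,
        (eVariationOn u (Ioo (gridPoint n k) (gridPoint n (k + 1)))).toReal) / n := by
        rw [← Finset.mul_sum, Finset.sum_add_distrib, Finset.sum_const, Finset.card_range,
          nsmul_eq_mul]
        field_simp
    _ ≤ _ := by
        gcongr
        exact hvar hu

theorem exists_rowSpin_discreteEnergy_le {u : ℝ → ℝ} (hrange : ∀ x ∈ Ioo (0 : ℝ) 1, u x ∈ Icc 0 1)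
    (hu : BoundedVariationOn u (Ioo 0 1)) (hn : 0 < n) :
    ∃ m : ℕ → ℕ,
      ∑ k ∈ Finset.range n,
          |∫ x in gridPoint n k..gridPoint n (k + 1), (stepFun n (rowSpin n m) x - u x)| ≤
        (1 + (eVariationOn u (Ioo 0 1)).toReal) / n ∧
      discreteEnergy n (rowSpin n m) ≤
        2 * volume.real {x ∈ Ioo (0 : ℝ) 1 | 0 < u x ∧ u x < 1} +
          (eVariationOn u (Ioo 0 1)).toReal + (4 + 2 * (eVariationOn u (Ioo 0 1)).toReal) / n := by
  set A := {x ∈ Ioo (0 : ℝ) 1 | 0 < u x ∧ u x < 1}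
  obtain ⟨x, hxmono, hx01, hxcell⟩ := exists_monotone_sample (gridPoint_strictMono hn) hn A
  rw [gridPoint_zero, gridPoint_self hn] at hx01
  set w : ℕ → ℝ := fun k => n * u (x k)
  have hw : ∀ k, w k ∈ Icc (0 : ℝ) n := fun k =>
    ⟨mul_nonneg n.cast_nonneg (hrange _ (hx01 k)).1,
      mul_le_of_le_one_right n.cast_nonneg (hrange _ (hx01 k)).2⟩
  have hV : ∑ k ∈ Finset.range (n - 1), |w (k + 1) - w k| ≤
      n * (eVariationOn u (Ioo 0 1)).toReal := by
    simp only [w, ← mul_sub, abs_mul, Nat.abs_cast, ← Finset.mul_sum]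
    gcongr
    exact sum_abs_sub_le_toReal_eVariationOn hu hxmono hx01 _
  have hmixed : ∀ k ∈ mixedRows n (hysteresisRound w),
      Ioo (gridPoint n k) (gridPoint n (k + 1)) ⊆ A := by
    intro k hk
    obtain ⟨hpos, hlt⟩ := mem_Ioo_of_mem_mixedRows_hysteresisRound (hw k).1 hk
    exact (hxcell k (Finset.mem_range.1 (Finset.mem_filter.1 hk).1)).2
      ⟨hx01 k, pos_of_mul_pos_right hpos n.cast_nonneg,
        lt_of_mul_lt_mul_left (hlt.trans_eq (mul_one _).symm) n.cast_nonneg⟩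
  refine ⟨hysteresisRound w, ?_, ?_⟩
  · exact sum_abs_integral_stepFun_rowSpin_sub_le hn hu (fun k hk => (hxcell k hk).1)
      (fun k _ => (hysteresisRound_le_ceil w k).trans (Nat.ceil_le.2 (hw k).2))
      (fun k _ => abs_hysteresisRound_sub_le (fun k => (hw k).1) k)
  · refine (discreteEnergy_rowSpin_hysteresisRound_le hn hw hV).trans ?_
    gcongr
    exact card_mixedRows_div_le
      (measure_ne_top_of_subset (sep_subset _ _) measure_Ioo_lt_top.ne) hmixed

end Recovery

lemma limsup_ofReal_le_of_le_add_div {E : ℕ → ℝ} {B K : ℝ} (hE : ∀ n > 0, E n ≤ B + K / n) :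
    limsup (fun n => ENNReal.ofReal (E n)) atTop ≤ ENNReal.ofReal B := by
  have hlim : Tendsto (fun n : ℕ => ENNReal.ofReal (B + K / n)) atTop
      (nhds (ENNReal.ofReal B)) := by
    simpa using ENNReal.tendsto_ofReal ((tendsto_const_div_atTop_nhds_zero_nat K).const_add B)
  rw [← hlim.limsup_eq]
  refine limsup_le_limsup ?_
  filter_upwards [eventually_gt_atTop 0] with n hn
  exact ENNReal.ofReal_le_ofReal (hE n hn)

/-- Upper bound (recovery sequence) for the one-dimensional spin energy with nearest and
`n`-th neighbour interactions. -/
theorem limsup_upper_bound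
    (u : ℝ → ℝ)
    (hrange : ∀ x ∈ Set.Ioo (0 : ℝ) 1, 0 ≤ u x ∧ u x ≤ 1)
    (hbv : BoundedVariationOn u (Set.Ioo 0 1)) :
    ∃ v : ℕ → ℕ → ℝ,
      (∀ n, 2 ≤ n → ∀ i ∈ Finset.Icc 1 (n ^ 2), v n i = 0 ∨ v n i = 1) ∧
      WeakStarTo (Set.Ioo 0 1) (fun n => stepFun n (v n)) u ∧
      Filter.limsup (fun n => ENNReal.ofReal (discreteEnergy n (v n))) atTop ≤
        2 * volume {x ∈ Set.Ioo (0 : ℝ) 1 | 0 < u x ∧ u x < 1} +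
          eVariationOn u (Set.Ioo 0 1) := by
  choose! m hm hE using fun n (hn : 0 < n) => exists_rowSpin_discreteEnergy_le hrange hbv hn
  have hA : volume {x ∈ Ioo (0 : ℝ) 1 | 0 < u x ∧ u x < 1} ≠ ∞ :=
    measure_ne_top_of_subset (sep_subset _ _) measure_Ioo_lt_top.ne
  have hcells := squeeze_zero' (.of_forall fun n => Finset.sum_nonneg fun _ _ => abs_nonneg _)
    ((eventually_gt_atTop 0).mono hm) (tendsto_const_div_atTop_nhds_zero_nat _)
  refine ⟨fun n => rowSpin n (m n), fun n _ i _ => rowSpin_eq_zero_or_one n (m n) i, ?_, ?_⟩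
  · exact weakStarTo_of_tendsto_sum_abs_integral_sub
      (fun n => (measurable_stepFun n _).aestronglyMeasurable)
      (aestronglyMeasurable_restrict_of_locallyBoundedVariationOn hbv.locallyBoundedVariationOn
        measurableSet_Ioo volume)
      (fun n x _ => abs_rowSpin_le_one n (m n) _)
      (fun x hx => abs_le.2 ⟨by linarith [(hrange x hx).1], (hrange x hx).2⟩) hcells
  · refine (limsup_ofReal_le_of_le_add_div hE).trans_eq ?_
    rw [ENNReal.ofReal_add (by positivity) (by positivity), ENNReal.ofReal_mul zero_le_two,
      ENNReal.ofReal_ofNat, ofReal_measureReal hA, ENNReal.ofReal_toReal hbv]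
end
end

section
/- Value of the volume-constrained minimum problem for the limit functional: Let L > 0 and σ ∈ (0,1/2]. Then min{2L, 1, 2√(2σL)} is the least element of the set of values F^L(v) = 2·λ({x ∈ (0,L) : 0 < v(x) < 1}) + Var(v;(0,L)) as v ranges over Adm(L,σ); that is, every v ∈ Adm(L,σ) satisfies F^L(v) ≥ min{2L, 1, 2√(2σL)}, and some v ∈ Adm(L,σ) attains this value. -/
open MeasureTheory Filter Set

noncomputable section

/-- `Adm L σ v` : `v` is admissible, i.e. `0 ≤ v ≤ 1` on `(0,L)`, `v` has finite pointwise
total variation on `(0,L)` and `∫_{(0,L)} v = σL`. -/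
def Adm (L σ : ℝ) (v : ℝ → ℝ) : Prop :=
  (∀ x ∈ Set.Ioo 0 L, 0 ≤ v x ∧ v x ≤ 1) ∧
  BoundedVariationOn v (Set.Ioo 0 L) ∧
  (∫ x in Set.Ioo 0 L, v x) = σ * L

/-- The limit functional `F^L(v) = 2·λ({x ∈ (0,L) : 0 < v(x) < 1}) + Var(v;(0,L))`. -/
def limitF (L : ℝ) (v : ℝ → ℝ) : ℝ :=
  2 * (volume {x ∈ Set.Ioo 0 L | 0 < v x ∧ v x < 1}).toReal +
    (eVariationOn v (Set.Ioo 0 L)).toReal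

/-!
If an admissible `v` takes neither of the values `0` and `1`, then the transition set
`{0 < v < 1}` is all of `(0, L)` and `F^L(v) ≥ 2L`; if it takes both, then `F^L(v) ≥ Var v ≥ 1`.
If it takes the value `0` but not `1`, then `v ≤ Var v` everywhere and `v` vanishes off the
transition set `T`, so `σL = ∫ v ≤ Var v · λ(T)` and AM-GM gives
`2 λ(T) + Var v ≥ 2√(2 λ(T) Var v) ≥ 2√(2σL)`. The remaining case reduces to this one by
`v ↦ 1 - v`, which replaces `σ` by `1 - σ`.

The bounds are attained by the constant `σ`, by the indicator of an interval of length `σL`, and by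
a step of height `h = √(2σL)` on an interval of length `h / 2`, for which AM-GM is an equality.
-/

theorem two_mul_sqrt_mul_le_add {a b : ℝ} (hab : 0 ≤ a + b) : 2 * √(a * b) ≤ a + b := by
  have hsqrt : √(a * b) ≤ (a + b) / 2 :=
    (Real.sqrt_le_left (div_nonneg hab zero_le_two)).2 (by linarith [four_mul_le_pow_two_add a b])
  linarith

theorem Ioo_inter_Ici_of_lt {α : Type*} [LinearOrder α] {a b c : α} (h : b < a) :
    Ioo b c ∩ Ici a = Ico a c := by
  grind

theorem setIntegral_le_mul_measureReal {α : Type*} [MeasurableSpace α] {μ : Measure α}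
    {f : α → ℝ} {s t : Set α} {C : ℝ} (hs : MeasurableSet s) (hts : t ⊆ s) (ht : μ t ≠ ⊤)
    (hC : 0 ≤ C) (hfC : ∀ x ∈ t, f x ≤ C) (hf0 : ∀ x ∈ s \ t, f x ≤ 0) :
    ∫ x in s, f x ∂μ ≤ C * μ.real t := by
  rcases hC.eq_or_lt with rfl | hC
  · rw [zero_mul]
    refine setIntegral_nonpos hs fun x hxs ↦ ?_
    by_cases hxt : x ∈ t
    exacts [hfC x hxt, hf0 x ⟨hxs, hxt⟩]
  · have hscaled : ENNReal.ofReal (∫ x, s.indicator f x / C ∂μ) ≤ μ t := by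
      refine integral_le_measure (fun x hxt ↦ ?_) (fun x hxt ↦ ?_)
      · rw [indicator_of_mem (hts hxt)]
        exact (div_le_one hC).2 (hfC x hxt)
      · exact div_nonpos_of_nonpos_of_nonneg
          (indicator_apply_le' (fun hxs ↦ hf0 x ⟨hxs, hxt⟩) fun _ ↦ le_rfl) hC.le
    rw [integral_div, integral_indicator hs, ENNReal.ofReal_le_iff_le_toReal ht] at hscaled
    exact (div_le_iff₀' hC).1 hscaled

theorem aemeasurable_restrict_of_locallyBoundedVariationOn {α : Type*} [LinearOrder α]
    [TopologicalSpace α] [OrderClosedTopology α] [MeasurableSpace α] [BorelSpace α] {f : α → ℝ}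
    {s : Set α} {μ : Measure α} (hs : MeasurableSet s) (hf : LocallyBoundedVariationOn f s) :
    AEMeasurable f (μ.restrict s) := by
  obtain ⟨p, q, hp, hq, rfl⟩ := hf.exists_monotoneOn_sub_monotoneOn
  exact (aemeasurable_restrict_of_monotoneOn hs hp).sub (aemeasurable_restrict_of_monotoneOn hs hq)

theorem eVariationOn_const {α E : Type*} [LinearOrder α] [PseudoEMetricSpace E] (c : E)
    (s : Set α) : eVariationOn (fun _ ↦ c) s = 0 :=
  (eVariationOn.eq_zero_iff _).2 fun _ _ _ _ ↦ edist_self c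

theorem eVariationOn_isometry_comp {α E F : Type*} [LinearOrder α] [PseudoEMetricSpace E]
    [PseudoEMetricSpace F] {g : E → F} (hg : Isometry g) (f : α → E) (s : Set α) :
    eVariationOn (g ∘ f) s = eVariationOn f s := by
  simp only [eVariationOn, Function.comp_apply, hg.edist_eq]

theorem eVariationOn_const_sub {α E : Type*} [LinearOrder α] [SeminormedAddCommGroup E] (c : E)
    (f : α → E) (s : Set α) : eVariationOn (fun x ↦ c - f x) s = eVariationOn f s :=
  eVariationOn_isometry_comp (IsometryEquiv.subLeft c).isometry f s

theorem eVariationOn_eq_ofReal_sub_of_isLeast_of_isGreatest {α : Type*} [LinearOrder α]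
    {f : α → ℝ} {s : Set α} {m M : ℝ} (hf : MonotoneOn f s) (hm : IsLeast (f '' s) m)
    (hM : IsGreatest (f '' s) M) : eVariationOn f s = ENNReal.ofReal (M - m) := by
  obtain ⟨⟨x, hx, rfl⟩, hmin⟩ := hm
  obtain ⟨⟨y, hy, rfl⟩, hmax⟩ := hM
  apply le_antisymm
  · rw [eVariationOn.eq_biSup_inter_Icc]
    refine iSup₂_le fun p hp ↦ ?_
    rw [hf.eVariationOn_eq hp.1 hp.2.1]
    exact ENNReal.ofReal_le_ofReal
      (sub_le_sub (hmax (mem_image_of_mem f hp.2.1)) (hmin (mem_image_of_mem f hp.1)))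
  · rw [← hf.eVariationOn_eq hx hy]
    exact eVariationOn.mono f inter_subset_left

theorem eVariationOn_indicator_Ici_const {α : Type*} [LinearOrder α] {s : Set α} {a : α} {h : ℝ}
    (hh : 0 ≤ h) (hlt : (s ∩ Iio a).Nonempty) (hge : (s ∩ Ici a).Nonempty) :
    eVariationOn ((Ici a).indicator fun _ ↦ h) s = ENNReal.ofReal h := by
  obtain ⟨x, hxs, hxa⟩ := hlt
  obtain ⟨y, hys, hay⟩ := hge
  have hmono : Monotone ((Ici a).indicator fun _ ↦ h) := fun u w huw ↦
    indicator_apply_le' (fun hau ↦ (indicator_of_mem (mem_Ici.2 (hau.trans huw)) fun _ ↦ h).ge)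
      fun _ ↦ indicator_nonneg (fun _ _ ↦ hh) w
  rw [eVariationOn_eq_ofReal_sub_of_isLeast_of_isGreatest (m := 0) (M := h) (hmono.monotoneOn s),
    sub_zero]
  · refine ⟨⟨x, hxs, indicator_of_notMem (not_le.2 hxa) _⟩, ?_⟩
    rintro _ ⟨z, -, rfl⟩
    exact indicator_nonneg (fun _ _ ↦ hh) z
  · refine ⟨⟨y, hys, indicator_of_mem hay _⟩, ?_⟩
    rintro _ ⟨z, -, rfl⟩
    exact indicator_apply_le' (fun _ ↦ le_rfl) fun _ ↦ hh

theorem eVariationOn_Ioo_indicator_Ici_const {α : Type*} [LinearOrder α] [DenselyOrdered α]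
    {a b c : α} {h : ℝ} (ha : a ∈ Ioo b c) (hh : 0 ≤ h) :
    eVariationOn ((Ici a).indicator fun _ ↦ h) (Ioo b c) = ENNReal.ofReal h := by
  obtain ⟨x, hbx, hxa⟩ := exists_between ha.1
  exact eVariationOn_indicator_Ici_const hh ⟨x, ⟨hbx, hxa.trans ha.2⟩, hxa⟩ ⟨a, ha, self_mem_Ici⟩

section Reflection

variable {L σ : ℝ} {v : ℝ → ℝ}

theorem Adm.integrableOn (hv : Adm L σ v) : IntegrableOn v (Ioo 0 L) := by
  obtain ⟨h01, hbv, -⟩ := hv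
  have hmeas : AEMeasurable v (volume.restrict (Ioo 0 L)) :=
    aemeasurable_restrict_of_locallyBoundedVariationOn measurableSet_Ioo
      hbv.locallyBoundedVariationOn
  refine .of_bound measure_Ioo_lt_top hmeas.aestronglyMeasurable 1 ?_
  filter_upwards [ae_restrict_mem measurableSet_Ioo] with x hx
  exact (Real.norm_of_nonneg (h01 x hx).1).trans_le (h01 x hx).2

theorem Adm.one_sub (hL : 0 ≤ L) (hv : Adm L σ v) : Adm L (1 - σ) fun x ↦ 1 - v x := by
  refine ⟨fun x hx ↦ ?_, ?_, ?_⟩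
  · obtain ⟨h0, h1⟩ := hv.1 x hx
    exact ⟨sub_nonneg.2 h1, sub_le_self 1 h0⟩
  · rw [BoundedVariationOn, eVariationOn_const_sub]
    exact hv.2.1
  · have hone : IntegrableOn (fun _ ↦ (1 : ℝ)) (Ioo 0 L) := integrableOn_const measure_Ioo_lt_top.ne
    rw [integral_sub hone hv.integrableOn, hv.2.2, setIntegral_const,
      Real.volume_real_Ioo_of_le hL, smul_eq_mul]
    ring

theorem limitF_one_sub (L : ℝ) (v : ℝ → ℝ) : limitF L (fun x ↦ 1 - v x) = limitF L v := by
  simp only [limitF, eVariationOn_const_sub, sub_pos, sub_lt_self_iff, and_comm]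

end Reflection

section LowerBound

variable {L σ : ℝ} {v : ℝ → ℝ}

theorem Adm.two_mul_sqrt_le_limitF (hv : Adm L σ v) (h0 : ∃ z ∈ Ioo 0 L, v z = 0)
    (h1 : ∀ x ∈ Ioo 0 L, v x ≠ 1) : 2 * √(2 * σ * L) ≤ limitF L v := by
  obtain ⟨z, hz, hvz⟩ := h0
  obtain ⟨h01, hbv, hint⟩ := hv
  set T : Set ℝ := {x ∈ Ioo 0 L | 0 < v x ∧ v x < 1}
  set V : ℝ := (eVariationOn v (Ioo 0 L)).toReal
  have hTsub : T ⊆ Ioo 0 L := sep_subset _ _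
  have hv_le : ∀ x ∈ T, v x ≤ V := fun x hx ↦ by
    simpa only [hvz, sub_zero] using hbv.sub_le (hTsub hx) hz
  have hv_off : ∀ x ∈ Ioo 0 L \ T, v x ≤ 0 := fun x hx ↦ not_lt.1 fun hpos ↦
    hx.2 ⟨hx.1, hpos, (h01 x hx.1).2.lt_of_ne (h1 x hx.1)⟩
  have hmass : σ * L ≤ V * volume.real T := hint ▸ setIntegral_le_mul_measureReal
    measurableSet_Ioo hTsub (measure_ne_top_of_subset hTsub measure_Ioo_lt_top.ne)
    ENNReal.toReal_nonneg hv_le hv_off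
  calc 2 * √(2 * σ * L) ≤ 2 * √(2 * volume.real T * V) := by gcongr 2 * √?_; linarith
    _ ≤ 2 * volume.real T + V := two_mul_sqrt_mul_le_add (by positivity)

theorem Adm.two_mul_sqrt_one_sub_le_limitF (hL : 0 ≤ L) (hv : Adm L σ v)
    (h0 : ∀ x ∈ Ioo 0 L, v x ≠ 0) (h1 : ∃ y ∈ Ioo 0 L, v y = 1) :
    2 * √(2 * (1 - σ) * L) ≤ limitF L v := by
  obtain ⟨y, hy, hvy⟩ := h1
  rw [← limitF_one_sub]
  exact (hv.one_sub hL).two_mul_sqrt_le_limitF ⟨y, hy, sub_eq_zero.2 hvy.symm⟩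
    fun x hx ↦ sub_eq_self.not.2 (h0 x hx)

theorem Adm.two_mul_le_limitF (hL : 0 ≤ L) (hv : Adm L σ v) (h0 : ∀ x ∈ Ioo 0 L, v x ≠ 0)
    (h1 : ∀ x ∈ Ioo 0 L, v x ≠ 1) : 2 * L ≤ limitF L v := by
  have hT : {x ∈ Ioo 0 L | 0 < v x ∧ v x < 1} = Ioo 0 L := sep_eq_self_iff_mem_true.2 fun x hx ↦
    ⟨(hv.1 x hx).1.lt_of_ne (h0 x hx).symm, (hv.1 x hx).2.lt_of_ne (h1 x hx)⟩
  rw [limitF, hT, ← measureReal_def, Real.volume_real_Ioo_of_le hL, sub_zero]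
  exact le_add_of_nonneg_right ENNReal.toReal_nonneg

theorem one_le_limitF (hbv : BoundedVariationOn v (Ioo 0 L))
    (h0 : ∃ z ∈ Ioo 0 L, v z = 0) (h1 : ∃ y ∈ Ioo 0 L, v y = 1) : 1 ≤ limitF L v := by
  obtain ⟨z, hz, hvz⟩ := h0
  obtain ⟨y, hy, hvy⟩ := h1
  have hvar : 1 ≤ (eVariationOn v (Ioo 0 L)).toReal := by
    simpa only [hvy, hvz, sub_zero] using hbv.sub_le hy hz
  exact hvar.trans (le_add_of_nonneg_left (by positivity))

theorem Adm.min_le_limitF (hL : 0 ≤ L) (hv : Adm L σ v) :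
    min (min (2 * L) 1) (2 * √(2 * min σ (1 - σ) * L)) ≤ limitF L v := by
  by_cases h0 : ∃ z ∈ Ioo 0 L, v z = 0 <;> by_cases h1 : ∃ y ∈ Ioo 0 L, v y = 1
  · exact min_le_of_left_le (min_le_of_right_le (one_le_limitF hv.2.1 h0 h1))
  · push Not at h1
    refine min_le_of_right_le (le_trans ?_ (hv.two_mul_sqrt_le_limitF h0 h1))
    gcongr
    exact min_le_left σ (1 - σ)
  · push Not at h0
    refine min_le_of_right_le (le_trans ?_ (hv.two_mul_sqrt_one_sub_le_limitF hL h0 h1))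
    gcongr
    exact min_le_right σ (1 - σ)
  · push Not at h0 h1
    exact min_le_of_left_le (min_le_of_left_le (hv.two_mul_le_limitF hL h0 h1))

end LowerBound

section Attainment

variable {L σ a h : ℝ}

theorem adm_const (hL : 0 ≤ L) (hσ : σ ∈ Icc 0 1) : Adm L σ fun _ ↦ σ := by
  refine ⟨fun _ _ ↦ hσ, ?_, ?_⟩
  · rw [BoundedVariationOn, eVariationOn_const]
    exact ENNReal.zero_ne_top
  · rw [setIntegral_const, Real.volume_real_Ioo_of_le hL, sub_zero, smul_eq_mul, mul_comm]

theorem limitF_const (hL : 0 ≤ L) (hσ : σ ∈ Ioo 0 1) : limitF L (fun _ ↦ σ) = 2 * L := by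
  have hT : {x ∈ Ioo 0 L | 0 < σ ∧ σ < 1} = Ioo 0 L := sep_eq_self_iff_mem_true.2 fun _ _ ↦ hσ
  rw [limitF, hT, eVariationOn_const, ← measureReal_def, Real.volume_real_Ioo_of_le hL, sub_zero,
    ENNReal.toReal_zero, add_zero]

theorem adm_indicator_Ici_const (ha : a ∈ Ioo 0 L) (hh : h ∈ Icc 0 1)
    (hmass : h * (L - a) = σ * L) : Adm L σ ((Ici a).indicator fun _ ↦ h) := by
  refine ⟨fun x _ ↦ ⟨indicator_nonneg (fun _ _ ↦ hh.1) x,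
    indicator_apply_le' (fun _ ↦ hh.2) fun _ ↦ zero_le_one⟩, ?_, ?_⟩
  · rw [BoundedVariationOn, eVariationOn_Ioo_indicator_Ici_const ha hh.1]
    exact ENNReal.ofReal_ne_top
  · rw [setIntegral_indicator measurableSet_Ici, Ioo_inter_Ici_of_lt ha.1, setIntegral_const,
      Real.volume_real_Ico_of_le ha.2.le, smul_eq_mul, mul_comm, hmass]

theorem limitF_indicator_Ici_one (ha : a ∈ Ioo 0 L) :
    limitF L ((Ici a).indicator fun _ ↦ 1) = 1 := by
  have hT : {x ∈ Ioo 0 L | 0 < (Ici a).indicator (fun _ ↦ (1 : ℝ)) x ∧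
      (Ici a).indicator (fun _ ↦ (1 : ℝ)) x < 1} = ∅ := by
    grind [indicator_apply]
  rw [limitF, hT, eVariationOn_Ioo_indicator_Ici_const ha zero_le_one]
  simp

theorem limitF_indicator_Ici_const (ha : a ∈ Ioo 0 L) (hh : h ∈ Ioo 0 1) :
    limitF L ((Ici a).indicator fun _ ↦ h) = 2 * (L - a) + h := by
  have hT : {x ∈ Ioo 0 L | 0 < (Ici a).indicator (fun _ ↦ h) x ∧
      (Ici a).indicator (fun _ ↦ h) x < 1} = Ico a L := by
    rw [← Ioo_inter_Ici_of_lt ha.1]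
    grind [indicator_apply]
  rw [limitF, hT, eVariationOn_Ioo_indicator_Ici_const ha hh.1.le, ← measureReal_def,
    Real.volume_real_Ico_of_le ha.2.le, ENNReal.toReal_ofReal hh.1.le]

theorem exists_adm_limitF_eq_one (hL : 0 < L) (hσ : σ ∈ Ioo 0 1) :
    ∃ v, Adm L σ v ∧ limitF L v = 1 := by
  have ha : L - σ * L ∈ Ioo 0 L := ⟨by nlinarith [hσ.2], sub_lt_self L (mul_pos hσ.1 hL)⟩
  exact ⟨_, adm_indicator_Ici_const ha ⟨zero_le_one, le_rfl⟩ (by ring),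
    limitF_indicator_Ici_one ha⟩

theorem exists_adm_limitF_eq_two_mul_sqrt (hσL : 0 < σ * L)
    (hle : 2 * √(2 * σ * L) ≤ min (2 * L) 1) :
    ∃ v, Adm L σ v ∧ limitF L v = 2 * √(2 * σ * L) := by
  set h := √(2 * σ * L)
  have hpos : 0 < h := Real.sqrt_pos.2 (by linarith)
  have hsq : h * h = 2 * σ * L := Real.mul_self_sqrt (by linarith)
  obtain ⟨hhL, hh1⟩ := le_min_iff.1 hle
  have ha : L - h / 2 ∈ Ioo 0 L := ⟨by linarith, by linarith⟩
  refine ⟨(Ici (L - h / 2)).indicator fun _ ↦ h,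
    adm_indicator_Ici_const ha ⟨hpos.le, by linarith⟩ (by linarith), ?_⟩
  rw [limitF_indicator_Ici_const ha ⟨hpos, by linarith⟩]
  ring

theorem exists_adm_limitF_eq_two_mul_sqrt_min (hL : 0 < L) (hσ : σ ∈ Ioo 0 1)
    (hle : 2 * √(2 * min σ (1 - σ) * L) ≤ min (2 * L) 1) :
    ∃ v, Adm L σ v ∧ limitF L v = 2 * √(2 * min σ (1 - σ) * L) := by
  rcases min_choice σ (1 - σ) with hmin | hmin <;> rw [hmin] at hle ⊢
  · exact exists_adm_limitF_eq_two_mul_sqrt (mul_pos hσ.1 hL) hle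
  · obtain ⟨v, hv, hFv⟩ :=
      exists_adm_limitF_eq_two_mul_sqrt (mul_pos (sub_pos.2 hσ.2) hL) hle
    exact ⟨fun x ↦ 1 - v x, sub_sub_cancel 1 σ ▸ hv.one_sub hL.le, (limitF_one_sub L v).trans hFv⟩

end Attainment

theorem volume_constrained_min_value_general (L σ : ℝ) (hL : 0 < L) (hσ0 : 0 < σ) (hσ1 : σ < 1) :
    IsLeast {c : ℝ | ∃ v : ℝ → ℝ, Adm L σ v ∧ limitF L v = c}
      (min (min (2 * L) 1) (2 * √(2 * min σ (1 - σ) * L))) := by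
  have hσ : σ ∈ Ioo 0 1 := ⟨hσ0, hσ1⟩
  constructor
  · rcases le_total (min (2 * L) 1) (2 * √(2 * min σ (1 - σ) * L)) with hle | hle
    · rw [min_eq_left hle]
      rcases min_choice (2 * L) 1 with hmin | hmin <;> rw [hmin]
      · exact ⟨fun _ ↦ σ, adm_const hL.le (Ioo_subset_Icc_self hσ), limitF_const hL.le hσ⟩
      · exact exists_adm_limitF_eq_one hL hσ
    · rw [min_eq_right hle]
      exact exists_adm_limitF_eq_two_mul_sqrt_min hL hσ hle
  · rintro _ ⟨v, hv, rfl⟩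
    exact hv.min_le_limitF hL.le

/-- Value of the volume-constrained minimum problem for the limit functional. -/
theorem volume_constrained_min_value (L σ : ℝ) (hL : 0 < L) (hσ1 : 0 < σ) (hσ2 : σ ≤ 1 / 2) :
    IsLeast {c : ℝ | ∃ v : ℝ → ℝ, Adm L σ v ∧ limitF L v = c}
      (min (min (2 * L) 1) (2 * Real.sqrt (2 * σ * L))) := by
  simpa only [min_eq_left (by linarith : σ ≤ 1 - σ)] using
    volume_constrained_min_value_general L σ hL hσ1 (by linarith)
end
end

section
/- For all τ, x, y ∈ [0,1], φ_τ(x,y) = φ_{1−τ}(y,x). -/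
open MeasureTheory Set

noncomputable section

/-- The boundary term `φ_τ(x,y) = λ( [0,1] ∩ ( ([−τ,x−τ] ∪ [1−τ,x+1−τ]) Δ [0,y] ) )`. -/
def phi (τ x y : ℝ) : ℝ :=
  (volume (Set.Icc (0 : ℝ) 1 ∩
    symmDiff (Set.Icc (-τ) (x - τ) ∪ Set.Icc (1 - τ) (x + 1 - τ)) (Set.Icc 0 y))).toReal

/- On the circle `ℝ/ℤ`, let `A_x` be the arc covered by `[0, x]`. Up to a null set, the union of the
two intervals in `φ_τ(x, y)` meets `[0, 1]` in the rotated arc `A_x - τ`, so `φ_τ(x, y)` is the Haar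
measure of `(A_x - τ) Δ A_y`. Rotating by `τ` turns this into the measure of `A_x Δ (A_y + τ)`, and
`τ = -(1 - τ)` in `ℝ/ℤ`. -/

open scoped Pointwise symmDiff

/-- The arc of the circle `ℝ/ℤ` that starts at `0` and runs through `[0, x]`, as the image of this
interval: it is empty for `x < 0` and the whole circle for `1 ≤ x`. -/
def arc (x : ℝ) : Set UnitAddCircle :=
  (↑) '' Icc 0 x

theorem measurableSet_arc (x : ℝ) : MeasurableSet (arc x) :=
  (isCompact_Icc.image (AddCircle.continuous_mk' 1)).isClosed.measurableSet

theorem coe_mem_arc_iff_fract_le {t x : ℝ} : (t : UnitAddCircle) ∈ arc x ↔ Int.fract t ≤ x := by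
  constructor
  · rintro ⟨s, ⟨hs0, hsx⟩, hst⟩
    obtain ⟨n, hn⟩ := AddSubgroup.mem_zmultiples_iff.1 (QuotientAddGroup.eq_iff_sub_mem.1 hst)
    have fract_eq : Int.fract s = Int.fract t := Int.fract_eq_fract.2 ⟨n, by simpa using hn.symm⟩
    have fract_le_self : Int.fract s ≤ s :=
      sub_le_self s (Int.cast_nonneg (Int.floor_nonneg.2 hs0))
    exact fract_eq ▸ fract_le_self.trans hsx
  · exact fun h ↦ ⟨Int.fract t, ⟨Int.fract_nonneg t, h⟩, AddCircle.coe_fract t⟩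

theorem coe_mem_arc_iff_mem_Icc {t x : ℝ} (ht : t ∈ Ico 0 1) :
    (t : UnitAddCircle) ∈ arc x ↔ t ∈ Icc 0 x := by
  rw [coe_mem_arc_iff_fract_le, Int.fract_eq_self.2 ht, mem_Icc, and_iff_right ht.1]

theorem coe_mem_arc_iff_mem_Icc_union_Icc {t x : ℝ} (ht : t ∈ Ico 0 2) :
    (t : UnitAddCircle) ∈ arc x ↔ t ∈ Icc 0 x ∪ Icc 1 (x + 1) := by
  obtain ht1 | ht1 := lt_or_ge t 1
  · rw [coe_mem_arc_iff_mem_Icc ⟨ht.1, ht1⟩]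
    grind
  · have fract_eq : Int.fract t = t - 1 := by
      rw [← Int.fract_sub_one, Int.fract_eq_self]
      grind
    rw [coe_mem_arc_iff_fract_le, fract_eq]
    grind

theorem coe_mem_neg_vadd_arc_iff {τ t x : ℝ} (hτ : τ ∈ Icc 0 1) (ht : t ∈ Ico 0 1) :
    (t : UnitAddCircle) ∈ -(τ : UnitAddCircle) +ᵥ arc x ↔
      t ∈ Icc (-τ) (x - τ) ∪ Icc (1 - τ) (x + 1 - τ) := by
  rw [mem_neg_vadd_set_iff, vadd_eq_add, ← AddCircle.coe_add,
    coe_mem_arc_iff_mem_Icc_union_Icc (by grind)]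
  grind

theorem volume_addCircle_eq_volume_preimage_inter_Ico (T : ℝ) [Fact (0 < T)] (t : ℝ)
    {U : Set (AddCircle T)} (hU : MeasurableSet U) :
    volume U = volume (((↑) : ℝ → AddCircle T) ⁻¹' U ∩ Ico t (t + T)) := by
  rw [AddCircle.add_projection_respects_measure T t hU]
  exact measure_congr ((ae_eq_refl _).inter Ico_ae_eq_Ioc.symm)

theorem phi_eq_volume_symmDiff_arc {τ : ℝ} (hτ : τ ∈ Icc 0 1) (x y : ℝ) :
    phi τ x y = volume.real ((-(τ : UnitAddCircle) +ᵥ arc x) ∆ arc y) := by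
  have preimage_eq : ((↑) : ℝ → UnitAddCircle) ⁻¹' ((-(τ : UnitAddCircle) +ᵥ arc x) ∆ arc y) ∩
        Ico 0 1 =
      ((Icc (-τ) (x - τ) ∪ Icc (1 - τ) (x + 1 - τ)) ∆ Icc 0 y) ∩ Ico 0 1 := by
    ext t
    refine and_congr_left fun ht ↦ ?_
    rw [mem_preimage, mem_symmDiff, mem_symmDiff, coe_mem_neg_vadd_arc_iff hτ ht,
      coe_mem_arc_iff_mem_Icc ht]
  have hmeas : MeasurableSet ((-(τ : UnitAddCircle) +ᵥ arc x) ∆ arc y) :=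
    ((measurableSet_arc x).const_vadd _).symmDiff (measurableSet_arc y)
  rw [phi, measureReal_def, volume_addCircle_eq_volume_preimage_inter_Ico 1 0 hmeas, zero_add,
    preimage_eq, inter_comm]
  exact congrArg ENNReal.toReal (measure_congr ((ae_eq_refl _).inter Ico_ae_eq_Icc.symm))

theorem phi_symm_general {τ : ℝ} (hτ : τ ∈ Icc 0 1) (x y : ℝ) : phi τ x y = phi (1 - τ) y x := by
  have neg_coe_one_sub : -((1 - τ : ℝ) : UnitAddCircle) = τ := by simp
  calc
    phi τ x y = volume.real ((-(τ : UnitAddCircle) +ᵥ arc x) ∆ arc y) :=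
      phi_eq_volume_symmDiff_arc hτ x y
    _ = volume.real (arc x ∆ ((τ : UnitAddCircle) +ᵥ arc y)) :=
      congrArg ENNReal.toReal (measure_neg_vadd_symmDiff volume _ _ _)
    _ = volume.real ((-((1 - τ : ℝ) : UnitAddCircle) +ᵥ arc y) ∆ arc x) := by
      rw [neg_coe_one_sub, symmDiff_comm]
    _ = phi (1 - τ) y x := (phi_eq_volume_symmDiff_arc (Icc.one_sub_mem hτ) y x).symm

/-- Symmetry of the boundary term: `φ_τ(x,y) = φ_{1−τ}(y,x)`. -/
theorem phi_symm (τ x y : ℝ) (hτ : τ ∈ Set.Icc (0 : ℝ) 1)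
    (hx : x ∈ Set.Icc (0 : ℝ) 1) (hy : y ∈ Set.Icc (0 : ℝ) 1) :
    phi τ x y = phi (1 - τ) y x :=
  phi_symm_general hτ x y
end
end

section
/- Monotonicity of the boundary term: for all τ ∈ [0,1/2] and all x, y ∈ [0,1] with x ≥ y, one has φ_τ(x,y) ≤ φ_τ(y,x). -/
open MeasureTheory Set

noncomputable section

/-!
On the circle `ℝ / ℤ`, the first set in `phi τ x y` is the arc `[0, x]` rotated by `-τ`, so
`phi τ x y = x + y - 2 m`, where `m` is the length of the overlap of the rotated arc with `[0, y]`.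
The two pieces of the rotated arc are the translates of `[0, x]` by `-τ` and by `1 - τ`. Hence, for
`y ≤ x`, half of `phi τ y x - phi τ x y` equals `T τ - T (1 - τ)`, where `T s` is the length of
`[y - s, x - s] ∩ [0, y]`. This is an overlap of two intervals of fixed lengths whose midpoints are
`|s - x / 2|` apart, so it is smaller for `s = 1 - τ`, which is farther from `x / 2` than `τ`.
-/

section MeasureReal

variable {α : Type*} [MeasurableSpace α] {μ : Measure α}

lemma measureReal_symmDiff_eq_add_sub_two_mul_inter {s t : Set α} (hs : MeasurableSet s)
    (ht : MeasurableSet t) (hs' : μ s ≠ ⊤ := by finiteness) (ht' : μ t ≠ ⊤ := by finiteness) :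
    μ.real (symmDiff s t) = μ.real s + μ.real t - 2 * μ.real (s ∩ t) := by
  have hst := measureReal_inter_add_sdiff (s := s) ht hs'
  have hts := measureReal_inter_add_sdiff (s := t) hs ht'
  rw [inter_comm] at hts
  rw [measureReal_symmDiff_eq hs ht hs' ht']
  linarith

lemma aedisjoint_Icc_Icc_of_le [PartialOrder α] [NullSingletonClass μ] {a b c d : α} (hbc : b ≤ c) :
    AEDisjoint μ (Icc a b) (Icc c d) := by
  refine measure_mono_null (fun t ht ↦ ?_) (measure_singleton b)
  exact le_antisymm ht.1.2 (hbc.trans ht.2.1)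

lemma measureReal_Icc_union_Icc_inter [PartialOrder α] [TopologicalSpace α]
    [OrderClosedTopology α] [CompactIccSpace α] [OpensMeasurableSpace α]
    [IsFiniteMeasureOnCompacts μ] [NullSingletonClass μ] {a b c d : α} (hbc : b ≤ c) {s : Set α}
    (hs : MeasurableSet s) :
    μ.real ((Icc a b ∪ Icc c d) ∩ s) = μ.real (Icc a b ∩ s) + μ.real (Icc c d ∩ s) := by
  have hfin (u v : α) : μ (Icc u v ∩ s) ≠ ⊤ :=
    measure_ne_top_of_subset inter_subset_left isCompact_Icc.measure_lt_top.ne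
  rw [union_inter_distrib_right]
  exact measureReal_union₀ (measurableSet_Icc.inter hs).nullMeasurableSet
    ((aedisjoint_Icc_Icc_of_le hbc).mono inter_subset_left inter_subset_left)
    (hfin a b) (hfin c d)

end MeasureReal

section Intervals

lemma volume_real_Icc_inter_Icc (a b c d : ℝ) :
    volume.real (Icc a b ∩ Icc c d) = max (min b d - max a c) 0 := by
  rw [Icc_inter_Icc, Real.volume_real_Icc]

lemma volume_real_closedBall_inter_closedBall (a b r s : ℝ) :
    volume.real (Metric.closedBall a r ∩ Metric.closedBall b s) =
      max (min (2 * min r s) (r + s - dist a b)) 0 := by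
  rw [Real.closedBall_eq_Icc, Real.closedBall_eq_Icc, volume_real_Icc_inter_Icc, Real.dist_eq]
  grind

lemma volume_real_closedBall_inter_closedBall_anti {a a' b b' r s : ℝ}
    (h : dist a b ≤ dist a' b') :
    volume.real (Metric.closedBall a' r ∩ Metric.closedBall b' s) ≤
      volume.real (Metric.closedBall a r ∩ Metric.closedBall b s) := by
  simp only [volume_real_closedBall_inter_closedBall]
  gcongr

end Intervals

/-- The length of the part of `[0, y]` covered by the translate `[-s, x - s]` of `[0, x]`. -/
def shiftOverlap (s x y : ℝ) : ℝ :=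
  volume.real (Icc (-s) (x - s) ∩ Icc 0 y)

/-- The arc `[0, x]` of the circle `ℝ / ℤ`, rotated by `-τ`. It is encoded as the union of two
translates of `[0, x]` in `ℝ`, to be intersected with the fundamental domain `[0, 1]`. -/
def rotatedArc (τ x : ℝ) : Set ℝ :=
  Icc (-τ) (x - τ) ∪ Icc (1 - τ) (x + 1 - τ)

section RotatedArc

variable {s τ x y : ℝ}

lemma shiftOverlap_eq_max_min (hs : 0 ≤ s) : shiftOverlap s x y = max (min (x - s) y) 0 := by
  rw [shiftOverlap, volume_real_Icc_inter_Icc, max_eq_right (neg_nonpos.2 hs), sub_zero]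

lemma shiftOverlap_swap_eq_volume_real (s x y : ℝ) :
    shiftOverlap s y x = volume.real (Icc s (x + s) ∩ Icc 0 y) := by
  rw [shiftOverlap, volume_real_Icc_inter_Icc, volume_real_Icc_inter_Icc]
  grind

lemma shiftOverlap_eq_shiftOverlap_swap_add (hs : 0 ≤ s) (hy : 0 ≤ y) (hyx : y ≤ x) :
    shiftOverlap s x y = shiftOverlap s y x + volume.real (Icc (y - s) (x - s) ∩ Icc 0 y) := by
  have hsplit : Icc (-s) (x - s) = Icc (-s) (y - s) ∪ Icc (y - s) (x - s) :=
    (Icc_union_Icc_eq_Icc (by linarith) (by linarith)).symm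
  have hswap : shiftOverlap s y x = shiftOverlap s y y := by
    have : y - s ≤ y := by linarith
    simp only [shiftOverlap_eq_max_min hs, min_eq_left this, min_eq_left (this.trans hyx)]
  rw [hswap, shiftOverlap, hsplit, measureReal_Icc_union_Icc_inter le_rfl measurableSet_Icc,
    shiftOverlap]

lemma measurableSet_rotatedArc (τ x : ℝ) : MeasurableSet (rotatedArc τ x) :=
  measurableSet_Icc.union measurableSet_Icc

lemma volume_real_rotatedArc_inter_Icc (τ y : ℝ) (hx : x ≤ 1) :
    volume.real (rotatedArc τ x ∩ Icc 0 y) = shiftOverlap τ x y + shiftOverlap (1 - τ) y x := by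
  rw [rotatedArc, measureReal_Icc_union_Icc_inter (by linarith) measurableSet_Icc,
    shiftOverlap_swap_eq_volume_real (1 - τ) x y, shiftOverlap, add_sub_assoc]

lemma volume_real_rotatedArc_inter_Icc_zero_one (hτ : τ ∈ Icc 0 1) (hx : x ∈ Icc 0 1) :
    volume.real (rotatedArc τ x ∩ Icc 0 1) = x := by
  obtain ⟨hτ₀, hτ₁⟩ := hτ
  obtain ⟨hx₀, hx₁⟩ := hx
  rw [volume_real_rotatedArc_inter_Icc τ 1 hx₁, shiftOverlap_eq_max_min hτ₀,
    shiftOverlap_eq_max_min (sub_nonneg.2 hτ₁)]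
  grind

lemma phi_eq_add_sub_two_mul_shiftOverlap (hτ : τ ∈ Icc 0 1) (hx : x ∈ Icc 0 1)
    (hy : y ∈ Icc 0 1) :
    phi τ x y = x + y - 2 * (shiftOverlap τ x y + shiftOverlap (1 - τ) y x) := by
  have hIcc : Icc 0 1 ∩ Icc 0 y = Icc 0 y := inter_eq_right.2 (Icc_subset_Icc_right hy.2)
  have hinter : Icc 0 1 ∩ rotatedArc τ x ∩ Icc 0 y = rotatedArc τ x ∩ Icc 0 y := by
    rw [inter_right_comm, hIcc, inter_comm]
  have harc : volume (Icc 0 1 ∩ rotatedArc τ x) ≠ ⊤ :=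
    measure_ne_top_of_subset inter_subset_left measure_Icc_lt_top.ne
  calc phi τ x y = volume.real (symmDiff (Icc 0 1 ∩ rotatedArc τ x) (Icc 0 y)) := by
        rw [← hIcc, ← inter_symmDiff_distrib_left, phi, rotatedArc, measureReal_def]
    _ = volume.real (rotatedArc τ x ∩ Icc 0 1) + volume.real (Icc 0 y) -
          2 * volume.real (rotatedArc τ x ∩ Icc 0 y) := by
        rw [measureReal_symmDiff_eq_add_sub_two_mul_inter
          (measurableSet_Icc.inter (measurableSet_rotatedArc τ x)) measurableSet_Icc harc
            measure_Icc_lt_top.ne,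
          hinter, inter_comm]
    _ = x + y - 2 * (shiftOverlap τ x y + shiftOverlap (1 - τ) y x) := by
        rw [volume_real_rotatedArc_inter_Icc_zero_one hτ hx,
          Real.volume_real_Icc_of_le hy.1, sub_zero, volume_real_rotatedArc_inter_Icc τ y hx.2]

lemma phi_swap_sub_phi (hτ : τ ∈ Icc 0 1) (hx : x ∈ Icc 0 1) (hy : y ∈ Icc 0 1) (hyx : y ≤ x) :
    phi τ y x - phi τ x y =
      2 * (volume.real (Icc (y - τ) (x - τ) ∩ Icc 0 y) -
        volume.real (Icc (y - (1 - τ)) (x - (1 - τ)) ∩ Icc 0 y)) := by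
  rw [phi_eq_add_sub_two_mul_shiftOverlap hτ hx hy, phi_eq_add_sub_two_mul_shiftOverlap hτ hy hx,
    shiftOverlap_eq_shiftOverlap_swap_add hτ.1 hy.1 hyx,
    shiftOverlap_eq_shiftOverlap_swap_add (sub_nonneg.2 hτ.2) hy.1 hyx]
  ring

lemma volume_real_Icc_sub_inter_Icc_anti {t : ℝ} (h : |s - x / 2| ≤ |t - x / 2|) :
    volume.real (Icc (y - t) (x - t) ∩ Icc 0 y) ≤
      volume.real (Icc (y - s) (x - s) ∩ Icc 0 y) := by
  have hdist (u : ℝ) : dist ((y - u + (x - u)) / 2) ((0 + y) / 2) = |u - x / 2| := by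
    rw [Real.dist_eq, ← abs_neg]
    ring_nf
  have hradius (u : ℝ) : (x - u - (y - u)) / 2 = (x - y) / 2 := by ring
  simp only [Real.Icc_eq_closedBall, hradius]
  exact volume_real_closedBall_inter_closedBall_anti (by rwa [hdist, hdist])

end RotatedArc

/-- Monotonicity of the boundary term: for `τ ∈ [0,1/2]` and `x ≥ y` in `[0,1]`,
`φ_τ(x,y) ≤ φ_τ(y,x)`. -/
theorem phi_mono (τ x y : ℝ) (hτ : τ ∈ Set.Icc (0 : ℝ) (1 / 2))
    (hx : x ∈ Set.Icc (0 : ℝ) 1) (hy : y ∈ Set.Icc (0 : ℝ) 1) (hxy : y ≤ x) :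
    phi τ x y ≤ phi τ y x := by
  have hτ₁ : τ ∈ Icc 0 1 := ⟨hτ.1, hτ.2.trans (by norm_num)⟩
  have hfarther : |τ - x / 2| ≤ |1 - τ - x / 2| := by
    obtain ⟨-, hτ_half⟩ := hτ
    obtain ⟨-, hx₁⟩ := hx
    exact (abs_le.2 ⟨by linarith, by linarith⟩).trans (le_abs_self _)
  have hoverlap := volume_real_Icc_sub_inter_Icc_anti (y := y) hfarther
  have hdiff := phi_swap_sub_phi hτ₁ hx hy hxy
  linarith
end
end
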